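/- arXiv:1207.7295 — 6 statements merged into one kernel-verified Lean document; each statement's English description precedes it below -/
import Mathlib

section
/- For every n ≥ 1, the map sending a pair (P, j) — where P is a Dyck path of semilength n whose last descent has length k and 0 ≤ j ≤ k — to the son of P at height j, is a bijection from the set of all such pairs onto the set of all Dyck paths of semilength n+1. In other words, every Dyck path of semilength n+1 is obtained exactly once by the ECO construction. -/
/-!
A path whose last descent has length at least `j` is exactly one of the form `A ++ (-1)^j`
(`le_lastDescentLen_iff`), and its son at height `j` is `A ++ [1, -1] ++ (-1)^j` (`son_append`).
Inserting or deleting a peak anywhere does not affect being a Dyck path (`isDyck_insert_peak`),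
so sons of Dyck paths are Dyck paths.

Conversely, a nonempty Dyck path ends with a `-1` step and contains a `+1` step, so looking at its
last `+1` step writes it as `A ++ [1, -1] ++ (-1)^j` (`exists_last_peak`); deleting this last peak
gives a father. The position of the last `+1` step determines both `A` and `j`
(`append_one_replicate_inj`), so the father and the height are unique.
-/

/-- A Dyck path is a list of steps in `{+1, -1}` whose partial sums (heights)
are all nonnegative and whose total sum is `0`. -/
def IsDyck (s : List ℤ) : Prop :=
  (∀ x ∈ s, x = 1 ∨ x = -1) ∧ (∀ i : ℕ, 0 ≤ (s.take i).sum) ∧ s.sum = 0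

/-- The area of a path: the sum of all heights `h_0, …, h_{length}`. -/
def area (s : List ℤ) : ℤ :=
  ∑ i ∈ Finset.range (s.length + 1), (s.take i).sum

/-- The length of the last descent, i.e. of the final maximal run of `-1` steps. -/
def lastDescentLen (s : List ℤ) : ℕ :=
  (s.reverse.takeWhile (fun x => x == (-1 : ℤ))).length

/-- The son of a path `s` at height `j`: insert a peak `+1, -1` immediately
after position `length - j`. -/
def son (s : List ℤ) (j : ℕ) : List ℤ :=
  s.take (s.length - j) ++ [1, -1] ++ s.drop (s.length - j)

theorem le_lastDescentLen_iff (P : List ℤ) (j : ℕ) :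
    j ≤ lastDescentLen P ↔ ∃ A, P = A ++ List.replicate j (-1) := by
  induction P using List.reverseRecOn generalizing j with
  | nil =>
    cases j <;> simp [lastDescentLen]
  | append_singleton P x ih =>
    cases j with
    | zero => simp
    | succ j =>
      have key : (∃ A, P ++ [x] = A ++ List.replicate (j + 1) (-1)) ↔
          x = -1 ∧ ∃ A, P = A ++ List.replicate j (-1) := by
        simp only [List.replicate_succ', ← List.append_assoc]
        constructor
        · rintro ⟨A, h⟩
          obtain ⟨h1, h2⟩ := List.append_inj' h rfl
          exact ⟨by simpa using h2, A, h1⟩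
        · rintro ⟨rfl, A, rfl⟩
          exact ⟨A, rfl⟩
      rw [key, ← ih]
      by_cases hx : x = -1 <;> simp [lastDescentLen, hx]

theorem son_append (A : List ℤ) (j : ℕ) :
    son (A ++ List.replicate j (-1)) j = A ++ 1 :: List.replicate (j + 1) (-1) := by
  simp [son, List.replicate_succ]

/-- The heights along a concatenation are those of the first part, followed by those of the second
part shifted by the final height of the first. -/
theorem heights_append (A B : List ℤ) :
    (∀ i, 0 ≤ ((A ++ B).take i).sum) ↔
      (∀ i, 0 ≤ (A.take i).sum) ∧ ∀ i, 0 ≤ A.sum + (B.take i).sum := by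
  constructor
  · intro h
    refine ⟨fun i => ?_, fun i => ?_⟩
    · have := h (min i A.length)
      rw [List.take_append_of_le_length (min_le_right _ _)] at this
      rcases le_total i A.length with hi | hi
      · simpa [hi] using this
      · simpa [hi, List.take_of_length_le hi] using this
    · simpa [List.take_append, List.take_of_length_le] using h (A.length + i)
  · rintro ⟨hA, hB⟩ i
    rw [List.take_append, List.sum_append]
    rcases le_total i A.length with hi | hi
    · simpa [Nat.sub_eq_zero_of_le hi] using hA i
    · simpa [List.take_of_length_le hi] using hB (i - A.length)

theorem isDyck_insert_peak (A B : List ℤ) :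
    IsDyck (A ++ 1 :: -1 :: B) ↔ IsDyck (A ++ B) := by
  have hpeak : (∀ i, 0 ≤ A.sum + ((1 :: -1 :: B).take i).sum) ↔
      ∀ i, 0 ≤ A.sum + (B.take i).sum := by
    constructor
    · intro h i
      simpa using h (i + 2)
    · intro h i
      have h0 := h 0
      match i with
      | 0 => simpa using h0
      | 1 => simp at h0 ⊢; omega
      | i + 2 => simpa using h i
  unfold IsDyck
  rw [heights_append, heights_append, hpeak]
  refine and_congr ?_ (and_congr Iff.rfl (by simp))
  simp only [List.mem_append, List.mem_cons]
  grind

theorem append_one_replicate_inj {A A' : List ℤ} {m m' : ℕ}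
    (h : A ++ 1 :: List.replicate m (-1) = A' ++ 1 :: List.replicate m' (-1)) :
    A = A' ∧ m = m' := by
  have hr := congrArg List.reverse h
  simp only [List.reverse_append, List.reverse_cons, List.reverse_replicate,
    List.append_assoc, List.singleton_append] at hr
  clear h
  induction m generalizing m' with
  | zero =>
    cases m' with
    | zero => simpa using hr
    | succ m' => simp [List.replicate_succ] at hr
  | succ m ih =>
    cases m' with
    | zero => simp [List.replicate_succ] at hr
    | succ m' =>
      simp only [List.replicate_succ, List.cons_append, List.cons.injEq, true_and] at hr
      simpa using ih hr

/-- Splitting a list of `±1` steps at its last `+1` step, if there is one. -/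
theorem exists_last_up (Q : List ℤ) (h : ∀ x ∈ Q, x = 1 ∨ x = -1) :
    (∃ A m, Q = A ++ 1 :: List.replicate m (-1)) ∨ ∃ m, Q = List.replicate m (-1) := by
  induction Q using List.reverseRecOn with
  | nil => exact Or.inr ⟨0, rfl⟩
  | append_singleton Q x ih =>
    rcases h x (by simp) with rfl | rfl
    · exact Or.inl ⟨Q, 0, rfl⟩
    · rcases ih (fun y hy => h y (by simp [hy])) with ⟨A, m, rfl⟩ | ⟨m, rfl⟩
      · exact Or.inl ⟨A, m + 1, by simp [List.replicate_succ']⟩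
      · exact Or.inr ⟨m + 1, by simp [List.replicate_succ']⟩

theorem exists_last_peak (Q : List ℤ) (h : IsDyck Q) (hne : Q ≠ []) :
    ∃ A j, Q = A ++ 1 :: List.replicate (j + 1) (-1) := by
  obtain ⟨hstep, hpos, hsum⟩ := h
  rcases exists_last_up Q hstep with ⟨A, m, rfl⟩ | ⟨m, rfl⟩
  · cases m with
    | zero =>
      -- A final `+1` step ending at height `0` would start at height `-1`.
      have hA := hpos A.length
      simp at hA hsum
      omega
    | succ m => exact ⟨A, m, rfl⟩
  · simp at hsum
    simp [hsum] at hne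

/-- For every `n ≥ 1`, the ECO construction `(P, j) ↦ son P j`
(where `P` is a Dyck path of semilength `n` and `0 ≤ j ≤ lastDescentLen P`)
produces Dyck paths of semilength `n + 1`, and every Dyck path of semilength
`n + 1` is obtained exactly once. -/
theorem eco_construction_bijective (n : ℕ) (hn : 1 ≤ n) :
    (∀ (P : List ℤ) (j : ℕ), IsDyck P → P.length = 2 * n → j ≤ lastDescentLen P →
      IsDyck (son P j) ∧ (son P j).length = 2 * (n + 1)) ∧
    (∀ Q : List ℤ, IsDyck Q → Q.length = 2 * (n + 1) →
      ∃! pj : List ℤ × ℕ,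
        IsDyck pj.1 ∧ pj.1.length = 2 * n ∧ pj.2 ≤ lastDescentLen pj.1 ∧
          son pj.1 pj.2 = Q) := by
  refine ⟨fun P j hP hlen hj => ?_, fun Q hQ hlen => ?_⟩
  · obtain ⟨A, rfl⟩ := (le_lastDescentLen_iff P j).1 hj
    rw [son_append]
    refine ⟨(isDyck_insert_peak A _).2 hP, ?_⟩
    simp at hlen ⊢
    omega
  · have hne : Q ≠ [] := by
      rintro rfl
      simp at hlen
    obtain ⟨A, j, rfl⟩ := exists_last_peak Q hQ hne
    refine ⟨(A ++ List.replicate j (-1), j), ⟨(isDyck_insert_peak A _).1 hQ, ?_,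
      (le_lastDescentLen_iff _ _).2 ⟨A, rfl⟩, son_append A j⟩, ?_⟩
    · simp at hlen ⊢
      omega
    · rintro ⟨P, i⟩ ⟨-, -, hi, hson⟩
      obtain ⟨B, rfl⟩ := (le_lastDescentLen_iff P i).1 hi
      rw [son_append] at hson
      obtain ⟨rfl, hij⟩ := append_one_replicate_inj hson
      obtain rfl : i = j := by omega
      rfl
end

section
/- Let P be a Dyck path of semilength n whose last descent has length k, and let 0 ≤ j ≤ k. Then the son of P at height j has area equal to area(P) + 2j + 1; equivalently, the rank of the son (as a Dyck path of semilength n+1) equals rank(P) + j. -/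
/-- The rank of a Dyck path of semilength `n`: `(area - n) / 2`. -/
def rank (n : ℕ) (s : List ℤ) : ℤ := (area s - n) / 2

lemma area_cons (x : ℤ) (s : List ℤ) : area (x :: s) = (s.length + 1) * x + area s := by
  unfold area
  rw [List.length_cons, Finset.sum_range_succ']
  simp [Finset.sum_add_distrib]

/-- The coefficient of `a.sum` is `b.length` rather than `b.length + 1` because the junction point
is already counted in `area a`. -/
lemma area_append (a b : List ℤ) : area (a ++ b) = area a + b.length * a.sum + area b := by
  induction a with
  | nil => simp [area]
  | cons x a ih =>
    rw [List.cons_append, area_cons, area_cons, ih, List.sum_cons, List.length_append]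
    push_cast
    ring

lemma lastDescentLen_le_length (P : List ℤ) : lastDescentLen P ≤ P.length := by
  simpa [lastDescentLen] using
    (List.takeWhile_prefix (l := P.reverse) (fun x => x == (-1 : ℤ))).length_le

/-- The last `j` steps lie in the last descent, so they are `j` copies of `-1`. -/
lemma sum_drop_lastDescent (P : List ℤ) (j : ℕ) (hj : j ≤ lastDescentLen P) :
    (P.drop (P.length - j)).sum = -j := by
  have hP := hj.trans (lastDescentLen_le_length P)
  have hrev : (P.drop (P.length - j)).reverse = P.reverse.take j := by
    rw [List.take_reverse]
  have htake : P.reverse.take j = (P.reverse.takeWhile (fun x => x == (-1 : ℤ))).take j := by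
    refine (((List.takeWhile_prefix _).take j).eq_of_length ?_).symm
    rw [List.length_take, List.length_take, List.length_reverse, min_eq_left hP]
    exact min_eq_left hj
  have hall : P.reverse.take j = List.replicate j (-1) := by
    rw [List.eq_replicate_iff]
    refine ⟨by simp [hP], fun x hx => ?_⟩
    rw [htake] at hx
    simpa using List.mem_takeWhile_imp (List.mem_of_mem_take hx)
  rw [← List.sum_reverse, hrev, hall]
  simp

/-- If `P` is a Dyck path of semilength `n` with last descent of
length `k` and `0 ≤ j ≤ k`, then the son of `P` at height `j` has area
`area P + 2j + 1`; equivalently its rank (as a path of semilength `n+1`)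
is `rank P + j`. -/
theorem area_son (n k j : ℕ) (P : List ℤ) (hP : IsDyck P) (hlen : P.length = 2 * n)
    (hk : lastDescentLen P = k) (hj : j ≤ k) :
    area (son P j) = area P + 2 * j + 1 ∧
    rank (n + 1) (son P j) = rank n P + j := by
  have hD := sum_drop_lastDescent P j (hk ▸ hj)
  have hsplit := List.take_append_drop (P.length - j) P
  have hA : (P.take (P.length - j)).sum = j := by
    have h := hP.2.2
    rw [← hsplit, List.sum_append, hD] at h
    linarith
  have harea : area (son P j) = area P + 2 * j + 1 := by
    have h := congrArg area hsplit
    have hpeak : area [1, -1] = 1 := by decide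
    rw [area_append, hA] at h
    rw [son, area_append, area_append, List.sum_append, hA, hpeak, ← h]
    simp
    ring
  refine ⟨harea, ?_⟩
  unfold rank
  rw [harea]
  push_cast
  omega
end

section
/- Let P be a Dyck path of semilength n whose last descent has length k, and let 0 ≤ j < k. Then the son of P at height j is strictly below the son of P at height j+1 in the pointwise order on Dyck paths of semilength n+1, and no Dyck path of semilength n+1 lies strictly between them (i.e., the son at height j+1 covers the son at height j). Consequently the k+1 sons of P form a saturated chain in the pointwise order. -/
/-- The pointwise order on paths: `P` lies weakly below `Q` when every height of
`P` is at most the corresponding height of `Q`. -/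
def dyckLE (P Q : List ℤ) : Prop :=
  ∀ i : ℕ, (P.take i).sum ≤ (Q.take i).sum

/-- A path is determined by its length and its heights. -/
lemma eq_of_heights_eq (P Q : List ℤ) (hlen : P.length = Q.length)
    (h : ∀ i : ℕ, (P.take i).sum = (Q.take i).sum) : P = Q := by
  apply List.ext_getElem hlen
  intro i hi hi'
  have h1 := h (i + 1)
  rw [List.sum_take_succ P i hi, List.sum_take_succ Q i hi', h i] at h1
  linarith

/-- For `j` below the length of the last descent, the step followed by exactly `j` further steps
is a down-step. -/
lemma lastDescent_split (P : List ℤ) (j : ℕ) (hj : j < lastDescentLen P) :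
    ∃ A B : List ℤ, P = A ++ -1 :: B ∧ B.length = j := by
  unfold lastDescentLen at hj
  have hpre := List.takeWhile_prefix (l := P.reverse) (fun x => x == (-1 : ℤ))
  have hjr : j < P.reverse.length := hj.trans_le hpre.length_le
  have hval : P.reverse[j] = -1 := by
    rw [← hpre.getElem hj]
    have := List.mem_takeWhile_imp (List.getElem_mem hj)
    simpa using this
  refine ⟨(P.reverse.drop (j + 1)).reverse, (P.reverse.take j).reverse, ?_, ?_⟩
  · have h1 : P.reverse = P.reverse.take j ++ -1 :: P.reverse.drop (j + 1) := by
      rw [← hval, List.getElem_cons_drop, List.take_append_drop]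
    have h2 := congrArg List.reverse h1
    rw [List.reverse_reverse] at h2
    refine h2.trans ?_
    rw [List.reverse_append, List.reverse_cons, List.append_assoc, List.singleton_append]
  · simp only [List.length_reverse, List.length_take] at hjr ⊢
    omega

lemma son_lower (A B : List ℤ) :
    son (A ++ -1 :: B) B.length = A ++ -1 :: 1 :: -1 :: B := by
  have h : (A ++ -1 :: B).length - B.length = (A ++ [-1]).length := by
    simp only [List.length_append, List.length_cons, List.length_nil]; omega
  have h' : A ++ -1 :: B = (A ++ [-1]) ++ B := by simp
  rw [son, h, h', List.take_left, List.drop_left]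
  simp

lemma son_upper (A B : List ℤ) :
    son (A ++ -1 :: B) (B.length + 1) = A ++ 1 :: -1 :: -1 :: B := by
  have h : (A ++ -1 :: B).length - (B.length + 1) = A.length := by
    simp only [List.length_append, List.length_cons]; omega
  rw [son, h, List.take_left, List.drop_left]
  simp

/-- Turning the valley `-1, 1` after `A` into the peak `1, -1` changes no height except the
one after `A.length + 1` steps. -/
lemma heights_flip (A B : List ℤ) (i : ℕ) (hi : i ≠ A.length + 1) :
    ((A ++ -1 :: 1 :: -1 :: B).take i).sum = ((A ++ 1 :: -1 :: -1 :: B).take i).sum := by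
  rcases Nat.lt_or_ge A.length i with h | h
  · obtain ⟨t, rfl⟩ : ∃ t, i = A.length + (t + 2) := ⟨i - A.length - 2, by omega⟩
    simp only [List.take_length_add_append, List.take_succ_cons, List.sum_append, List.sum_cons]
    ring
  · rw [List.take_append_of_le_length h, List.take_append_of_le_length h]

lemma height_after_step (A C : List ℤ) (x : ℤ) :
    ((A ++ x :: C).take (A.length + 1)).sum = A.sum + x := by
  simp [List.take_length_add_append]

/-- If `P` is a Dyck path of semilength `n` with last descent of
length `k` and `0 ≤ j < k`, then the son of `P` at height `j` is strictly below
the son of `P` at height `j + 1` in the pointwise order, and no Dyck path of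
semilength `n + 1` lies strictly between them (the son at height `j+1` covers
the son at height `j`). -/
theorem son_covers_son (n k j : ℕ) (P : List ℤ) (hP : IsDyck P) (hlen : P.length = 2 * n)
    (hk : lastDescentLen P = k) (hj : j < k) :
    (dyckLE (son P j) (son P (j + 1)) ∧ son P j ≠ son P (j + 1)) ∧
    ¬ ∃ R : List ℤ, IsDyck R ∧ R.length = 2 * (n + 1) ∧
        dyckLE (son P j) R ∧ son P j ≠ R ∧
        dyckLE R (son P (j + 1)) ∧ R ≠ son P (j + 1) := by
  subst hk
  obtain ⟨A, B, rfl, rfl⟩ := lastDescent_split P j hj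
  rw [son_lower, son_upper]
  refine ⟨⟨fun i => ?_, fun h => ?_⟩, ?_⟩
  · by_cases hi : i = A.length + 1
    · subst hi
      rw [height_after_step, height_after_step]
      linarith
    · exact (heights_flip A B i hi).le
  · have h1 := List.append_cancel_left h
    norm_num at h1
  · rintro ⟨R, hR, hRlen, hlo, hne, hup, hne'⟩
    have hsum : ∀ i, i ≠ A.length + 1 →
        (R.take i).sum = ((A ++ -1 :: 1 :: -1 :: B).take i).sum := fun i hi =>
      le_antisymm ((hup i).trans_eq (heights_flip A B i hi).symm) (hlo i)
    simp only [List.length_append, List.length_cons] at hlen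
    have hm : A.length < R.length := by omega
    -- The remaining height of `R` is determined by its step after position `A.length`.
    have hstep : (R.take (A.length + 1)).sum = A.sum + R[A.length] := by
      rw [List.sum_take_succ R _ hm, hsum _ (by omega), List.take_left]
    rcases hR.1 _ (List.getElem_mem hm) with hx | hx
    · apply hne'
      refine eq_of_heights_eq _ _ (by simp only [List.length_append, List.length_cons]; omega) ?_
      intro i
      by_cases hi : i = A.length + 1
      · rw [hi, hstep, hx, height_after_step]
      · rw [hsum i hi, heights_flip A B i hi]
    · apply hne
      refine eq_of_heights_eq _ _ (by simp only [List.length_append, List.length_cons]; omega) ?_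
      intro i
      by_cases hi : i = A.length + 1
      · rw [hi, hstep, hx, height_after_step]
      · rw [hsum i hi]
end

section
/- For all n ≥ 3, 0 ≤ k ≤ n−2, and i ∈ ℕ: the number of Dyck paths of semilength n with rank i that end with the step sequence +1, (−1)^{k+1}, +1, −1 (i.e., end with U D^{k+1} U D) equals the number of Dyck paths of semilength n−1 with rank i whose last descent has length exactly k+1. (Thus the coefficient of x^i in P_n^{(k)}(x) counts Dyck paths of semilength n−1 at rank i with final descent of length exactly k+1.) -/
/-- `endsUDkUD s k` says the final `k + 3` steps of `s` are
`+1`, followed by `k + 1` copies of `-1`, followed by `+1, -1`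
(i.e. `s` ends with `U D^{k+1} U D`). -/
def endsUDkUD (s : List ℤ) (k : ℕ) : Prop :=
  ∃ t : List ℤ, s = t ++ (1 :: (List.replicate (k + 1) (-1) ++ [1, -1]))

/-- The polynomial `P_n^{(k)}(x) = Σ_P x^{rank P}`, the sum being over all Dyck
paths `P` of semilength `n` ending with `U D^{k+1} U D`; the coefficient of
`x^i` is the number of such paths of rank `i`, i.e. of area `n + 2i`
(all ranks are at most `n(n-1)/2 ≤ n²`, so the range below is exhaustive). -/
noncomputable def Pnk (n k : ℕ) : Polynomial ℤ :=
  ∑ i ∈ Finset.range (n * n + 1),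
    Polynomial.C ((Nat.card {P : List ℤ // IsDyck P ∧ P.length = 2 * n ∧
      endsUDkUD P k ∧ area P = (n : ℤ) + 2 * i}) : ℤ) * Polynomial.X ^ i

theorem isDyck_append_peak (s : List ℤ) : IsDyck (s ++ [1, -1]) ↔ IsDyck s := by
  unfold IsDyck
  constructor
  · rintro ⟨h1, h2, h3⟩
    refine ⟨fun x hx => h1 x (by simp [hx]), fun i => ?_, by simpa using h3⟩
    have h := h2 (min i s.length)
    rw [List.take_append_of_le_length (min_le_right _ _)] at h
    rcases le_total i s.length with hi | hi
    · rwa [min_eq_left hi] at h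
    · rw [min_eq_right hi] at h
      rwa [List.take_of_length_le hi, ← List.take_length (l := s)]
  · rintro ⟨h1, h2, h3⟩
    refine ⟨fun x hx => ?_, fun i => ?_, by simpa using h3⟩
    · simp only [List.mem_append, List.mem_cons, List.not_mem_nil, or_false] at hx
      rcases hx with hx | hx
      · exact h1 x hx
      · exact hx
    · rw [List.take_append, List.sum_append]
      refine add_nonneg (h2 i) ?_
      rcases i - s.length with _ | _ | j <;> simp

theorem area_append_peak (s : List ℤ) (hs : s.sum = 0) :
    area (s ++ [1, -1]) = area s + 1 := by
  unfold area
  have hl : (s ++ [1, -1]).length + 1 = s.length + 1 + 1 + 1 := by simp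
  rw [hl, Finset.sum_range_succ, Finset.sum_range_succ]
  have h : ∑ i ∈ Finset.range (s.length + 1), ((s ++ [1, -1]).take i).sum
      = ∑ i ∈ Finset.range (s.length + 1), (s.take i).sum := by
    refine Finset.sum_congr rfl fun i hi => ?_
    rw [List.take_append_of_le_length (by simpa [Nat.lt_succ_iff] using hi)]
  rw [h]
  simp [List.take_append, List.take_of_length_le, hs]

theorem lastDescentLen_append_descent (t : List ℤ) (m : ℕ) :
    lastDescentLen (t ++ 1 :: List.replicate m (-1)) = m := by
  simp [lastDescentLen]

/-- The sum condition of `IsDyck` rules out the path consisting only of down steps,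
which is why the last descent is preceded by an up step. -/
theorem lastDescentLen_eq_iff (s : List ℤ) (hs : IsDyck s) (m : ℕ) (hm : 0 < m) :
    lastDescentLen s = m ↔ ∃ t : List ℤ, s = t ++ 1 :: List.replicate m (-1) := by
  constructor
  · intro h
    set p : ℤ → Bool := fun x => x == (-1 : ℤ) with hp
    have hrep : s.reverse.takeWhile p = List.replicate m (-1) := by
      refine List.eq_replicate_iff.2 ⟨h, fun x hx => ?_⟩
      simpa [hp] using List.mem_takeWhile_imp hx
    have hsplit := List.takeWhile_append_dropWhile (p := p) (l := s.reverse)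
    rw [hrep] at hsplit
    rcases hd : s.reverse.dropWhile p with _ | ⟨a, r⟩
    · rw [hd, List.append_nil] at hsplit
      have hsum := congrArg List.sum hsplit
      rw [List.sum_reverse, hs.2.2] at hsum
      simp at hsum
      omega
    · have ha : a ≠ -1 := by
        have := List.head?_dropWhile_not p s.reverse
        rw [hd] at this
        simpa [hp] using this
      rw [hd] at hsplit
      have hmem : a ∈ s := List.mem_reverse.1 (by rw [← hsplit]; simp)
      obtain rfl : a = 1 := (hs.1 a hmem).resolve_right ha
      refine ⟨r.reverse, ?_⟩
      rw [← List.reverse_reverse s, ← hsplit]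
      simp
  · rintro ⟨t, rfl⟩
    exact lastDescentLen_append_descent t m

theorem endsUDkUD_append_peak_iff (s : List ℤ) (k : ℕ) :
    endsUDkUD (s ++ [1, -1]) k ↔ ∃ t : List ℤ, s = t ++ 1 :: List.replicate (k + 1) (-1) := by
  unfold endsUDkUD
  refine exists_congr fun t => ?_
  rw [← List.cons_append, ← List.append_assoc]
  exact List.append_left_inj _

/-- For `n ≥ 3`, `0 ≤ k ≤ n − 2` and `i ∈ ℕ`: the number of Dyck
paths of semilength `n` of rank `i` ending with `U D^{k+1} U D` equals the number
of Dyck paths of semilength `n − 1` of rank `i` whose last descent has length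
exactly `k + 1`. (Thus the coefficient of `x^i` in `P_n^{(k)}(x)` counts Dyck paths
of semilength `n − 1` at rank `i` with final descent of length exactly `k + 1`.) -/
theorem Pnk_coeff_counts_final_descent (n k i : ℕ) (hn : 3 ≤ n) (hk : k ≤ n - 2) :
    Nat.card {P : List ℤ // IsDyck P ∧ P.length = 2 * n ∧
        endsUDkUD P k ∧ area P = (n : ℤ) + 2 * i} =
    Nat.card {Q : List ℤ // IsDyck Q ∧ Q.length = 2 * (n - 1) ∧
        area Q = ((n : ℤ) - 1) + 2 * i ∧ lastDescentLen Q = k + 1} := by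
  symm
  have key : ∀ Q : List ℤ,
      (IsDyck Q ∧ Q.length = 2 * (n - 1) ∧ area Q = ((n : ℤ) - 1) + 2 * i ∧
        lastDescentLen Q = k + 1) ↔
      (IsDyck (Q ++ [1, -1]) ∧ (Q ++ [1, -1]).length = 2 * n ∧
        endsUDkUD (Q ++ [1, -1]) k ∧ area (Q ++ [1, -1]) = (n : ℤ) + 2 * i) := by
    intro Q
    rw [isDyck_append_peak]
    refine and_congr_right fun hQ => ?_
    rw [endsUDkUD_append_peak_iff, ← lastDescentLen_eq_iff Q hQ (k + 1) k.succ_pos,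
      area_append_peak Q hQ.2.2, List.length_append]
    simp only [List.length_cons, List.length_nil]
    constructor
    · rintro ⟨h1, h2, h3⟩
      exact ⟨by omega, h3, by omega⟩
    · rintro ⟨h1, h2, h3⟩
      exact ⟨by omega, by omega, h2⟩
  refine Nat.card_eq_of_bijective (fun Q => ⟨Q.1 ++ [1, -1], (key Q.1).1 Q.2⟩) ⟨?_, ?_⟩
  · intro Q R h
    exact Subtype.ext (List.append_cancel_right (congrArg Subtype.val h))
  · rintro ⟨P, hP⟩
    obtain ⟨t, ht⟩ := hP.2.2.1
    have hPQ : P = (t ++ 1 :: List.replicate (k + 1) (-1)) ++ [1, -1] := by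
      rw [ht, List.append_assoc, List.cons_append]
    subst hPQ
    exact ⟨⟨_, (key _).2 hP⟩, rfl⟩
end

section
/- For all n ≥ 4 and 2 ≤ k ≤ n−2, the polynomials P_n^{(k)}(x) satisfy the recursion P_n^{(k)}(x) = x · ( P_n^{(k−1)}(x) − x^{k−1} · P_{n−1}^{(k−2)}(x) ). -/
/-- A nonnegative walk: steps `±1`, all partial sums nonnegative, arbitrary final height. -/
def NonnegWalk (s : List ℤ) : Prop :=
  (∀ x ∈ s, x = 1 ∨ x = -1) ∧ ∀ i : ℕ, 0 ≤ (s.take i).sum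

/-- The nonnegative walks of length `m` with final height `h` and area `a`. -/
def walks (m : ℕ) (h a : ℤ) : Set (List ℤ) :=
  {s | NonnegWalk s ∧ s.length = m ∧ s.sum = h ∧ area s = a}

/-- The Dyck paths counted by the coefficient of `x ^ i` in `Pnk n k`, with `i` allowed to be any
integer. -/
def rankSet (n k : ℕ) (i : ℤ) : Set (List ℤ) :=
  {P | IsDyck P ∧ P.length = 2 * n ∧ endsUDkUD P k ∧ area P = (n : ℤ) + 2 * i}

theorem isDyck_iff (s : List ℤ) : IsDyck s ↔ NonnegWalk s ∧ s.sum = 0 := by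
  unfold IsDyck NonnegWalk
  tauto

theorem NonnegWalk.sum_nonneg {s : List ℤ} (h : NonnegWalk s) : 0 ≤ s.sum := by
  simpa using h.2 s.length

theorem nonnegWalk_snoc (s : List ℤ) (x : ℤ) :
    NonnegWalk (s ++ [x]) ↔ NonnegWalk s ∧ (x = 1 ∨ x = -1) ∧ 0 ≤ s.sum + x := by
  constructor
  · rintro ⟨h1, h2⟩
    refine ⟨⟨fun y hy => h1 y (by simp [hy]), fun i => ?_⟩, h1 x (by simp), ?_⟩
    · have := h2 (min i s.length)
      rw [List.take_append_of_le_length (by omega)] at this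
      rcases le_total i s.length with hi | hi
      · simpa [hi] using this
      · rw [List.take_of_length_le hi]
        simpa [hi] using this
    · simpa using h2 (s.length + 1)
  · rintro ⟨⟨h1, h2⟩, h3, h4⟩
    refine ⟨fun y hy => ?_, fun i => ?_⟩
    · rcases List.mem_append.1 hy with hy | hy
      · exact h1 y hy
      · rw [List.mem_singleton.1 hy]
        exact h3
    · rcases le_or_gt i s.length with hi | hi
      · rw [List.take_append_of_le_length hi]
        exact h2 i
      · rw [List.take_of_length_le (by simp; omega)]
        simpa using h4

theorem area_snoc (s : List ℤ) (x : ℤ) : area (s ++ [x]) = area s + (s.sum + x) := by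
  unfold area
  rw [List.length_append, List.length_singleton, Finset.sum_range_succ]
  congr 1
  · refine Finset.sum_congr rfl fun i hi => ?_
    rw [List.take_append_of_le_length (by have := Finset.mem_range.1 hi; omega)]
  · rw [List.take_of_length_le (by simp)]
    simp

theorem area_nil : area [] = 0 := by simp [area]

theorem nonnegWalk_append_replicate (s : List ℤ) (j : ℕ) :
    NonnegWalk (s ++ List.replicate j (-1)) ↔ NonnegWalk s ∧ (j : ℤ) ≤ s.sum := by
  induction j with
  | zero => simpa using fun h : NonnegWalk s => h.sum_nonneg
  | succ j ih =>
    rw [List.replicate_succ', ← List.append_assoc, nonnegWalk_snoc, ih]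
    simp only [List.sum_append, List.sum_replicate, nsmul_eq_mul]
    push_cast
    constructor
    · rintro ⟨⟨h1, h2⟩, -, h3⟩
      exact ⟨h1, by linarith⟩
    · rintro ⟨h1, h2⟩
      exact ⟨⟨h1, by linarith⟩, by simp, by linarith⟩

theorem two_mul_area_append_replicate (s : List ℤ) (j : ℕ) :
    2 * area (s ++ List.replicate j (-1)) = 2 * area s + 2 * j * s.sum - j * (j + 1) := by
  induction j with
  | zero => simp
  | succ j ih =>
    rw [List.replicate_succ', ← List.append_assoc, area_snoc, mul_add, ih]
    simp only [List.sum_append, List.sum_replicate, nsmul_eq_mul]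
    push_cast
    ring

/-! ### The prefix before `U D^{k+1} U D` -/

/-- The tail `U D^{k+1} U D`. -/
def tailUDkUD (k : ℕ) : List ℤ := 1 :: (List.replicate (k + 1) (-1) ++ [1, -1])

theorem append_tail (t : List ℤ) (k : ℕ) :
    t ++ tailUDkUD k = (((t ++ [1]) ++ List.replicate (k + 1) (-1)) ++ [1]) ++ [-1] := by
  simp [tailUDkUD]

theorem isDyck_append_tail (t : List ℤ) (k : ℕ) :
    IsDyck (t ++ tailUDkUD k) ↔ NonnegWalk t ∧ t.sum = k := by
  rw [isDyck_iff, append_tail, nonnegWalk_snoc, nonnegWalk_snoc, nonnegWalk_append_replicate,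
    nonnegWalk_snoc]
  simp only [List.sum_append, List.sum_replicate, nsmul_eq_mul, List.sum_singleton]
  push_cast
  constructor
  · rintro ⟨⟨⟨⟨⟨h, -⟩, -⟩, -⟩, -⟩, h2⟩
    exact ⟨h, by linarith⟩
  · rintro ⟨h, h2⟩
    refine ⟨⟨⟨⟨⟨h, by simp, ?_⟩, ?_⟩, by simp, ?_⟩, by simp, ?_⟩, ?_⟩ <;>
      rw [h2] <;> linarith [Int.natCast_nonneg k]

theorem two_mul_area_append_tail (t : List ℤ) (k : ℕ) (h : t.sum = k) :
    2 * area (t ++ tailUDkUD k) = 2 * area t + (k + 1) * (k + 2) + 2 := by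
  rw [append_tail, area_snoc, area_snoc]
  have := two_mul_area_append_replicate (t ++ [1]) (k + 1)
  rw [area_snoc] at this
  simp only [List.sum_append, List.sum_replicate, nsmul_eq_mul, List.sum_singleton, h] at this ⊢
  push_cast at this ⊢
  linarith

/-- Removing the tail `U D^{k+1} U D` is a bijection from `rankSet n k i` to a set of walks. -/
theorem ncard_rankSet (n k L : ℕ) (i a : ℤ) (hL : L + k + 4 = 2 * n)
    (ha : 2 * a + (k + 1) * (k + 2) + 2 = 2 * (n + 2 * i)) :
    (rankSet n k i).ncard = (walks L k a).ncard := by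
  have : rankSet n k i = (fun t => t ++ tailUDkUD k) '' walks L k a := by
    ext P
    constructor
    · rintro ⟨h1, h2, ⟨t, rfl⟩, h4⟩
      change IsDyck (t ++ tailUDkUD k) at h1
      change area (t ++ tailUDkUD k) = _ at h4
      rw [isDyck_append_tail] at h1
      have h5 := two_mul_area_append_tail t k h1.2
      refine ⟨t, ⟨h1.1, ?_, h1.2, ?_⟩, rfl⟩
      · simp at h2
        omega
      · linarith
    · rintro ⟨t, ⟨h1, h2, h3, h4⟩, rfl⟩
      have h5 := two_mul_area_append_tail t k h3
      refine ⟨(isDyck_append_tail t k).2 ⟨h1, h3⟩, ?_, ⟨t, rfl⟩, ?_⟩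
      · simp [tailUDkUD]
        omega
      · change area (t ++ tailUDkUD k) = _
        linarith
  rw [this, Set.ncard_image_of_injective _ (List.append_left_injective _)]

/-! ### Splitting a walk by its last step -/

theorem finite_walks (m : ℕ) (h a : ℤ) : (walks m h a).Finite := by
  refine ((List.finite_length_eq Bool m).image
    (List.map fun b => if b then (1 : ℤ) else -1)).subset ?_
  rintro s ⟨⟨h1, -⟩, h2, -, -⟩
  refine ⟨s.map fun x => decide (x = 1), by simpa using h2, ?_⟩
  rw [List.map_map]
  conv_rhs => rw [← List.map_id s]
  refine List.map_congr_left fun x hx => ?_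
  rcases h1 x hx with rfl | rfl <;> simp

theorem ncard_walks_succ (m : ℕ) (h a : ℤ) (hh : 0 ≤ h) :
    (walks (m + 1) h a).ncard =
      (walks m (h + 1) (a - h)).ncard + (walks m (h - 1) (a - h)).ncard := by
  have key : walks (m + 1) h a = (fun t => t ++ [-1]) '' walks m (h + 1) (a - h) ∪
      (fun t => t ++ [1]) '' walks m (h - 1) (a - h) := by
    ext s
    constructor
    · rintro ⟨h1, h2, h3, h4⟩
      rcases List.eq_nil_or_concat s with rfl | ⟨t, x, rfl⟩
      · simp at h2
      · simp only [List.concat_eq_append] at *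
        rw [nonnegWalk_snoc] at h1
        rw [area_snoc] at h4
        simp only [List.sum_append, List.sum_singleton, List.length_append,
          List.length_singleton] at h2 h3
        rcases h1.2.1 with rfl | rfl
        · exact Or.inr ⟨t, ⟨h1.1, by omega, by omega, by omega⟩, rfl⟩
        · exact Or.inl ⟨t, ⟨h1.1, by omega, by omega, by omega⟩, rfl⟩
    · rintro (⟨t, ⟨h1, h2, h3, h4⟩, rfl⟩ | ⟨t, ⟨h1, h2, h3, h4⟩, rfl⟩)
      · refine ⟨(nonnegWalk_snoc _ _).2 ⟨h1, Or.inr rfl, by omega⟩, by simp [h2], by simp [h3], ?_⟩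
        rw [area_snoc]
        omega
      · refine ⟨(nonnegWalk_snoc _ _).2 ⟨h1, Or.inl rfl, by omega⟩, by simp [h2], by simp [h3], ?_⟩
        rw [area_snoc]
        omega
  rw [key, Set.ncard_union_eq ?_ ((finite_walks _ _ _).image _) ((finite_walks _ _ _).image _),
    Set.ncard_image_of_injective _ (List.append_left_injective _),
    Set.ncard_image_of_injective _ (List.append_left_injective _)]
  rw [Set.disjoint_left]
  rintro _ ⟨t, -, rfl⟩ ⟨u, -, hu⟩
  have := (List.append_inj' hu rfl).2
  simp at this

/-- The recursion at the level of coefficients, with `k` in place of `k - 2`, and `n` in place of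
`n - 1`. -/
theorem ncard_recursion (n k : ℕ) (hk : k + 3 ≤ n) (i : ℤ) :
    (rankSet (n + 1) (k + 1) i).ncard =
      (rankSet (n + 1) (k + 2) (i + 1)).ncard + (rankSet n k (i - (k + 1))).ncard := by
  obtain ⟨L, hL⟩ : ∃ L, L + k + 4 = 2 * n := ⟨2 * n - k - 4, by omega⟩
  -- `c` is the triangular number `(k+1)(k+2)/2`.
  obtain ⟨c, hc⟩ := Int.even_mul_succ_self ((k : ℤ) + 1)
  have hc' : ((k : ℤ) + 1) * (k + 2) = 2 * c := by linarith
  rw [ncard_rankSet (n + 1) (k + 1) (L + 1) i (n + 2 * i - c - k - 2) (by omega)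
      (by push_cast; linarith),
    ncard_rankSet (n + 1) (k + 2) L (i + 1) (n + 2 * i - c - k - 2 - (k + 1)) (by omega)
      (by push_cast; linarith),
    ncard_rankSet n k L (i - (k + 1)) (n + 2 * i - c - k - 2 - (k + 1)) (by omega)
      (by linarith),
    ncard_walks_succ _ _ _ (by positivity)]
  push_cast
  ring_nf

/-! ### Bounds on the rank -/

/-- Heights have the parity of their position, so each odd position has height at least `1`; and a
height is at most its position. -/
theorem NonnegWalk.area_bounds (s : List ℤ) (h : NonnegWalk s) :
    (s.sum - s.length) % 2 = 0 ∧ s.sum ≤ s.length ∧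
      (s.length : ℤ) + s.length % 2 ≤ 2 * area s ∧
      2 * area s ≤ s.length * (s.length + 1) := by
  induction s using List.reverseRecOn with
  | nil => simp [area_nil]
  | append_singleton s x ih =>
    rw [nonnegWalk_snoc] at h
    obtain ⟨h1, h2, h3⟩ := h
    obtain ⟨i1, i2, i3, i4⟩ := ih h1
    rw [area_snoc]
    simp only [List.sum_append, List.sum_singleton, List.length_append, List.length_singleton]
    push_cast
    refine ⟨by omega, by omega, by omega, ?_⟩
    have : s.sum + x ≤ s.length + 1 := by omega
    linarith

theorem rankSet_eq_empty (n k : ℕ) (i : ℤ) (hi : i < 0 ∨ (n * n : ℤ) < i) :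
    rankSet n k i = ∅ := by
  rw [Set.eq_empty_iff_forall_notMem]
  rintro P ⟨h1, h2, -, h4⟩
  obtain ⟨-, -, h5, h6⟩ := ((isDyck_iff P).1 h1).1.area_bounds
  rw [h2] at h5 h6
  push_cast at h5 h6
  rcases hi with hi | hi
  · omega
  · linarith

theorem coeff_Pnk (n k i : ℕ) : (Pnk n k).coeff i = (rankSet n k i).ncard := by
  unfold Pnk
  simp only [Polynomial.finsetSum_coeff, Polynomial.coeff_C_mul_X_pow]
  rw [Finset.sum_ite_eq]
  split_ifs with h
  · rfl
  · rw [rankSet_eq_empty n k i (Or.inr _)]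
    · simp
    · rw [Finset.mem_range] at h
      have : n * n < i := by omega
      exact_mod_cast this

/-- For `n ≥ 4` and `2 ≤ k ≤ n − 2`,
`P_n^{(k)}(x) = x · (P_n^{(k−1)}(x) − x^{k−1} · P_{n−1}^{(k−2)}(x))`. -/
theorem Pnk_recursion (n k : ℕ) (hn : 4 ≤ n) (hk2 : 2 ≤ k) (hk : k ≤ n - 2) :
    Pnk n k =
      Polynomial.X * (Pnk n (k - 1) - Polynomial.X ^ (k - 1) * Pnk (n - 1) (k - 2)) := by
  obtain ⟨k, rfl⟩ : ∃ j, k = j + 2 := ⟨k - 2, by omega⟩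
  obtain ⟨n, rfl⟩ : ∃ j, n = j + 1 := ⟨n - 1, by omega⟩
  have e : k + 2 - 1 = k + 1 := rfl
  rw [e, Nat.add_sub_cancel, Nat.add_sub_cancel]
  have hkn : k + 3 ≤ n := by omega
  ext i
  rcases i with _ | i
  · -- A path of rank `0` would correspond to one of rank `-1` for `k + 1`.
    have h := ncard_recursion n k hkn (-1)
    rw [rankSet_eq_empty (n + 1) (k + 1) (-1) (Or.inl (by norm_num)), Set.ncard_empty] at h
    rw [coeff_Pnk, Polynomial.mul_coeff_zero, Polynomial.coeff_X_zero, zero_mul]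
    simp only [neg_add_cancel] at h
    simp only [Nat.cast_zero, Nat.cast_eq_zero]
    omega
  · rw [Polynomial.coeff_X_mul, Polynomial.coeff_sub, Polynomial.coeff_X_pow_mul', coeff_Pnk,
      coeff_Pnk, ncard_recursion n k hkn i]
    split_ifs with h
    · rw [coeff_Pnk]
      push_cast [h]
      ring
    · rw [rankSet_eq_empty n k (i - (k + 1)) (Or.inl (by omega))]
      simp
end

section
/- For every n ≥ 1 and every k with 0 ≤ k ≤ n(n−1)/2, the number of Dyck paths of semilength n having area n + 2k equals the number of partitions λ = (λ_1 ≥ λ_2 ≥ ⋯ ≥ λ_{n−1} ≥ 0) fitting inside the staircase shape (n−1, n−2, …, 2, 1) (i.e., with λ_j ≤ n − j for all 1 ≤ j ≤ n−1) whose size |λ| = λ_1 + ⋯ + λ_{n−1} equals n(n−1)/2 − k. -/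
/-- `Suffix n u d s`: the steps `s` continue a path with `u` up steps and `d` down steps to a path
with `n` steps of either kind, never going below height `0`. -/
def Suffix (n : ℕ) : ℕ → ℕ → List ℤ → Prop
  | u, d, [] => u = n ∧ d = n
  | u, d, x :: s => (x = 1 ∧ Suffix n (u + 1) d s) ∨ (x = -1 ∧ d < u ∧ Suffix n u (d + 1) s)

/-- The list recording, for each up step of the path, the number of down steps before it,
counting from an initial value `d`. -/
def downs : ℕ → List ℤ → List ℕ
  | _, [] => []
  | d, x :: s => if x = 1 then d :: downs d s else downs (d + 1) s

/-- `Admissible n u d L`: the length of `L` plus `u` is `n`, the list is weakly increasing with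
entries at least `d`, and its entry in position `i` (from `0`) is at most `u + i`. -/
def Admissible (n : ℕ) : ℕ → ℕ → List ℕ → Prop
  | u, _, [] => u = n
  | u, d, e :: L => d ≤ e ∧ e ≤ u ∧ Admissible n (u + 1) e L

theorem Admissible.mono {n u d d' : ℕ} {L : List ℕ} (h : Admissible n u d L) (hd : d' ≤ d) :
    Admissible n u d' L := by
  cases L with
  | nil => exact h
  | cons e L => exact ⟨hd.trans h.1, h.2⟩

theorem Suffix.admissible {n : ℕ} {s : List ℤ} : ∀ {u d : ℕ}, d ≤ u → Suffix n u d s →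
    Admissible n u d (downs d s) := by
  induction s with
  | nil => intro u d _ h; exact h.1
  | cons x s ih =>
    intro u d hd h
    rcases h with ⟨rfl, h⟩ | ⟨rfl, hlt, h⟩
    · simpa [downs, Admissible, hd] using ih (by omega) h
    · have := (ih (by omega) h).mono (Nat.le_succ d)
      simpa [downs] using this

theorem Suffix.injective {n : ℕ} {s : List ℤ} : ∀ {u d : ℕ} {t : List ℤ}, d ≤ u →
    Suffix n u d s → Suffix n u d t → downs d s = downs d t → s = t := by
  -- If one path goes up and the other down, the first list starts with `d` whereas
  -- all entries of the second are at least `d + 1`.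
  have key : ∀ {u d : ℕ} {s t : List ℤ}, d < u → Suffix n u (d + 1) t →
      d :: downs d s = downs (d + 1) t → False := by
    intro u d s t hd h he
    have := h.admissible hd
    rw [← he] at this
    have := this.1
    omega
  induction s with
  | nil =>
    intro u d t hd hs ht he
    obtain ⟨rfl, rfl⟩ := hs
    cases t with
    | nil => rfl
    | cons y t =>
      rcases ht with ⟨rfl, ht⟩ | ⟨rfl, hlt, ht⟩
      · simp [downs] at he
      · omega
  | cons x s ih =>
    intro u d t hd hs ht he
    cases t with
    | nil =>
      obtain ⟨rfl, rfl⟩ := ht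
      rcases hs with ⟨rfl, hs⟩ | ⟨rfl, hlt, hs⟩
      · simp [downs] at he
      · omega
    | cons y t =>
      rcases hs with ⟨rfl, hs⟩ | ⟨rfl, hlt, hs⟩ <;> rcases ht with ⟨rfl, ht⟩ | ⟨rfl, hlt', ht⟩
      · rw [ih (by omega) hs ht (by simpa [downs] using he)]
      · exact (key hlt' ht (by simpa [downs] using he)).elim
      · exact (key hlt hs (by simpa [downs] using he.symm)).elim
      · rw [ih (by omega) hs ht (by simpa [downs] using he)]

/-- Prepending `k` down steps does not change the recorded list. -/
theorem Suffix.prepend_downs {n u : ℕ} (k : ℕ) : ∀ {d : ℕ} {s : List ℤ}, d + k ≤ u →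
    Suffix n u (d + k) s → ∃ t, Suffix n u d t ∧ downs d t = downs (d + k) s := by
  induction k with
  | zero => intro d s _ h; exact ⟨s, h, rfl⟩
  | succ k ih =>
    intro d s hd h
    have e : d + (k + 1) = d + 1 + k := by omega
    rw [e] at h hd ⊢
    obtain ⟨t, ht, he⟩ := ih hd h
    exact ⟨-1 :: t, Or.inr ⟨rfl, by omega, ht⟩, by simpa [downs] using he⟩

theorem Admissible.exists_suffix {n : ℕ} {L : List ℕ} : ∀ {u d : ℕ}, d ≤ u → Admissible n u d L →
    ∃ s, Suffix n u d s ∧ downs d s = L := by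
  induction L with
  | nil =>
    intro u d hd h
    obtain rfl : u = n := h
    obtain ⟨k, rfl⟩ := Nat.exists_eq_add_of_le hd
    exact Suffix.prepend_downs (s := []) k le_rfl ⟨rfl, rfl⟩
  | cons e L ih =>
    intro u d hd h
    obtain ⟨hde, heu, h⟩ := h
    obtain ⟨s, hs, rfl⟩ := ih (by omega) h
    obtain ⟨k, rfl⟩ := Nat.exists_eq_add_of_le hde
    obtain ⟨t, ht, he⟩ := Suffix.prepend_downs (n := n) (s := 1 :: s) k heu (Or.inl ⟨rfl, hs⟩)
    exact ⟨t, ht, by simpa [downs] using he⟩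

/-- Area plus twice the sum of the recorded list depends only on `n`, `u` and `d`. The identity is
doubled to avoid division by `2`. -/
theorem Suffix.area {n : ℕ} {s : List ℤ} : ∀ {u d : ℕ}, Suffix n u d s →
    2 * ∑ i ∈ Finset.range (s.length + 1), ((u : ℤ) - d + (s.take i).sum)
      + 4 * ((downs d s).sum : ℕ) =
    n * (n - 1) - u * (u - 1) + 2 * d * (n - u) + (n - d) * (n - d + 1) := by
  induction s with
  | nil =>
    intro u d h
    obtain ⟨rfl, rfl⟩ := h
    simp [downs]
  | cons x s ih =>
    intro u d h
    rw [List.length_cons, Finset.sum_range_succ']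
    simp only [List.take_succ_cons, List.sum_cons, List.take_zero, List.sum_nil]
    rcases h with ⟨rfl, h⟩ | ⟨rfl, hlt, h⟩
    · have := ih h
      have e : ∀ i, ((u : ℤ) - d + (1 + (s.take i).sum)) =
          ((u + 1 : ℕ) : ℤ) - d + (s.take i).sum := by intro i; push_cast; ring
      simp only [e, downs, if_true, List.sum_cons]
      push_cast at this ⊢
      linarith
    · have := ih h
      have e : ∀ i, ((u : ℤ) - d + (-1 + (s.take i).sum)) =
          (u : ℤ) - (d + 1 : ℕ) + (s.take i).sum := by intro i; push_cast; ring
      have h1 : ¬ ((-1 : ℤ) = 1) := by norm_num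
      simp only [e, downs, if_neg h1]
      push_cast at this ⊢
      linarith

theorem suffix_iff {n : ℕ} {s : List ℤ} : ∀ {u d : ℕ}, d ≤ u →
    (Suffix n u d s ↔ (∀ x ∈ s, x = 1 ∨ x = -1) ∧ (∀ i : ℕ, 0 ≤ (u : ℤ) - d + (s.take i).sum) ∧
      (u : ℤ) - d + s.sum = 0 ∧ u + d + s.length = 2 * n) := by
  induction s with
  | nil =>
    intro u d hd
    simp only [Suffix, List.take_nil, List.sum_nil, List.length_nil, List.not_mem_nil]
    constructor
    · rintro ⟨rfl, rfl⟩
      refine ⟨by simp, by simp, by simp, by omega⟩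
    · rintro ⟨-, -, h1, h2⟩
      omega
  | cons x s ih =>
    intro u d hd
    simp only [Suffix, List.sum_cons, List.length_cons, List.forall_mem_cons]
    constructor
    · rintro (⟨rfl, h⟩ | ⟨rfl, hlt, h⟩)
      · obtain ⟨h1, h2, h3, h4⟩ := (ih (by omega)).1 h
        refine ⟨⟨Or.inl rfl, h1⟩, ?_, by push_cast at h3; linarith, by omega⟩
        rintro (_ | i)
        · simp [hd]
        · have := h2 i
          rw [List.take_succ_cons, List.sum_cons]
          push_cast at this
          linarith
      · obtain ⟨h1, h2, h3, h4⟩ := (ih (by omega)).1 h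
        refine ⟨⟨Or.inr rfl, h1⟩, ?_, by push_cast at h3; linarith, by omega⟩
        rintro (_ | i)
        · simp [hd]
        · have := h2 i
          rw [List.take_succ_cons, List.sum_cons]
          push_cast at this
          linarith
    · rintro ⟨⟨rfl | rfl, h1⟩, h2, h3, h4⟩
      · refine Or.inl ⟨rfl, (ih (by omega)).2 ⟨h1, ?_, by push_cast; linarith, by omega⟩⟩
        intro i
        have := h2 (i + 1)
        rw [List.take_succ_cons, List.sum_cons] at this
        push_cast
        linarith
      · have hlt : d < u := by
          have := h2 1
          simp at this
          omega
        refine Or.inr ⟨rfl, hlt, (ih (by omega)).2 ⟨h1, ?_, by push_cast; linarith, by omega⟩⟩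
        intro i
        have := h2 (i + 1)
        rw [List.take_succ_cons, List.sum_cons] at this
        push_cast
        linarith

theorem isDyck_iff_s17 (n : ℕ) (s : List ℤ) : IsDyck s ∧ s.length = 2 * n ↔ Suffix n 0 0 s := by
  rw [suffix_iff le_rfl]
  simp [IsDyck, and_assoc]

theorem area_eq {n : ℕ} {s : List ℤ} (h : Suffix n 0 0 s) :
    area s + 2 * ((downs 0 s).sum : ℕ) = n * n := by
  have := h.area
  simp only [Nat.cast_zero, sub_zero, zero_add] at this
  unfold area
  linarith

theorem Admissible.add_length {n : ℕ} {L : List ℕ} : ∀ {u d : ℕ}, Admissible n u d L →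
    u + L.length = n := by
  induction L with
  | nil => intro u d h; exact h
  | cons e L ih =>
    intro u d h
    have := ih h.2.2
    simp only [List.length_cons]
    omega

theorem admissible_ofFn {m : ℕ} : ∀ {u d : ℕ} (μ : Fin m → ℕ),
    Admissible (u + m) u d (List.ofFn μ) ↔
      (∀ i, d ≤ μ i) ∧ (∀ i j, i ≤ j → μ i ≤ μ j) ∧ ∀ i, μ i ≤ u + i := by
  induction m with
  | zero => intro u d μ; simp [Admissible]
  | succ m ih =>
    intro u d μ
    rw [List.ofFn_succ, Admissible, show u + (m + 1) = u + 1 + m by omega, ih]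
    constructor
    · rintro ⟨h1, h2, h3, h4, h5⟩
      refine ⟨?_, ?_, ?_⟩
      · exact Fin.cases h1 fun i => h1.trans (h3 i)
      · intro i j
        cases i using Fin.cases with
        | zero => cases j using Fin.cases with
          | zero => simp
          | succ j => intro _; exact h3 j
        | succ i => cases j using Fin.cases with
          | zero => intro h; simp at h
          | succ j => intro h; exact h4 i j (by simpa using h)
      · refine Fin.cases (by simpa using h2) fun i => ?_
        have := h5 i
        simp only [Fin.val_succ]
        omega
    · rintro ⟨h1, h2, h3⟩
      refine ⟨h1 0, by simpa using h3 0, fun i => h2 _ _ (Fin.zero_le _),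
        fun i j h => h2 _ _ (by simpa using h), fun i => ?_⟩
      have := h3 i.succ
      simp only [Fin.val_succ] at this
      omega

/-- Reading a partition inside the staircase from its smallest part upwards. -/
theorem admissible_rev {m : ℕ} (l : Fin m → ℕ) :
    Admissible (m + 1) 0 0 (0 :: List.ofFn (l ∘ Fin.rev)) ↔
      (∀ j j' : Fin m, j ≤ j' → l j' ≤ l j) ∧ ∀ j : Fin m, l j ≤ m - (j : ℕ) := by
  rw [Admissible, show m + 1 = 0 + 1 + m by omega, admissible_ofFn]
  simp only [le_refl, true_and, zero_le, implies_true, Function.comp]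
  refine and_congr ⟨fun h j j' hj => ?_, fun h i j hi => h _ _ (by simpa using hi)⟩
    ⟨fun h j => ?_, fun h i => ?_⟩
  · simpa using h j'.rev j.rev (by simpa using hj)
  · have := h j.rev
    simp only [Fin.rev_rev, Fin.val_rev] at this
    omega
  · have := h i.rev
    simp only [Fin.val_rev] at this
    omega

/-- Dyck paths correspond to admissible lists. -/
theorem card_dyck (n k N : ℕ) (hN : (n : ℤ) * n = n + 2 * k + 2 * N) :
    Nat.card {P : List ℤ // IsDyck P ∧ P.length = 2 * n ∧ area P = (n : ℤ) + 2 * k} =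
    Nat.card {L : List ℕ // Admissible n 0 0 L ∧ L.sum = N} := by
  have suff (P : {P : List ℤ // IsDyck P ∧ P.length = 2 * n ∧ area P = (n : ℤ) + 2 * k}) :
      Suffix n 0 0 P.1 := (isDyck_iff_s17 n P.1).1 ⟨P.2.1, P.2.2.1⟩
  refine Nat.card_eq_of_bijective (fun P => ⟨downs 0 P.1, (suff P).admissible le_rfl, ?_⟩) ⟨?_, ?_⟩
  · have := area_eq (suff P)
    have := P.2.2.2
    omega
  · intro P Q h
    exact Subtype.ext ((suff P).injective le_rfl (suff Q) (congrArg Subtype.val h))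
  · rintro ⟨L, hL, hs⟩
    obtain ⟨s, h, rfl⟩ := hL.exists_suffix le_rfl
    obtain ⟨h1, h2⟩ := (isDyck_iff_s17 n s).2 h
    have := area_eq h
    exact ⟨⟨s, h1, h2, by omega⟩, rfl⟩

/-- Partitions inside the staircase correspond to admissible lists. -/
theorem card_partitions (m N : ℕ) :
    Nat.card {l : Fin m → ℕ // (∀ j j' : Fin m, j ≤ j' → l j' ≤ l j) ∧
      (∀ j : Fin m, l j ≤ m - (j : ℕ)) ∧ (∑ j, l j) = N} =
    Nat.card {L : List ℕ // Admissible (m + 1) 0 0 L ∧ L.sum = N} := by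
  have sum_rev (l : Fin m → ℕ) : (0 :: List.ofFn (l ∘ Fin.rev)).sum = ∑ j, l j := by
    rw [List.sum_cons, List.sum_ofFn, zero_add]
    exact Equiv.sum_comp Fin.revPerm l
  refine Nat.card_eq_of_bijective (fun l => ⟨0 :: List.ofFn (l.1 ∘ Fin.rev),
    (admissible_rev l.1).2 ⟨l.2.1, l.2.2.1⟩, (sum_rev l.1).trans l.2.2.2⟩) ⟨?_, ?_⟩
  · intro l l' h
    have h := List.ofFn_injective (List.cons.inj (congrArg Subtype.val h)).2
    refine Subtype.ext (funext fun j => ?_)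
    simpa using congrFun h j.rev
  · rintro ⟨L, hL, hs⟩
    have hlen := hL.add_length
    cases L with
    | nil => simp at hlen
    | cons e L =>
      obtain rfl : e = 0 := Nat.le_zero.1 hL.2.1
      obtain rfl : L.length = m := by simpa using hlen
      have e : List.ofFn ((L.get ∘ Fin.rev) ∘ Fin.rev) = L := by
        rw [Function.comp_assoc, Fin.rev_involutive.comp_self, Function.comp_id, List.ofFn_get]
      have hA := (admissible_rev (L.get ∘ Fin.rev)).1 (by rwa [e])
      refine ⟨⟨L.get ∘ Fin.rev, hA.1, hA.2, ?_⟩, Subtype.ext ?_⟩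
      · rw [← sum_rev, e, hs]
      · simp only [e]

/-- For every `n ≥ 1` and every `0 ≤ k ≤ n(n−1)/2`, the number
of Dyck paths of semilength `n` with area `n + 2k` equals the number of
partitions `λ_1 ≥ λ_2 ≥ ⋯ ≥ λ_{n−1} ≥ 0` fitting inside the staircase shape
`(n−1, n−2, …, 2, 1)` (i.e. `λ_j ≤ n − j`, here `0`-indexed as `l j ≤ n − 1 − j`)
of size `n(n−1)/2 − k`. -/
theorem dyck_area_eq_staircase_partitions (n k : ℕ) (hn : 1 ≤ n)
    (hk : k ≤ n * (n - 1) / 2) :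
    Nat.card {P : List ℤ // IsDyck P ∧ P.length = 2 * n ∧ area P = (n : ℤ) + 2 * k} =
    Nat.card {l : Fin (n - 1) → ℕ //
      (∀ j j' : Fin (n - 1), j ≤ j' → l j' ≤ l j) ∧
      (∀ j : Fin (n - 1), l j ≤ n - 1 - (j : ℕ)) ∧
      (∑ j, l j) = n * (n - 1) / 2 - k} := by
  obtain ⟨m, rfl⟩ := Nat.exists_eq_add_of_le' hn
  simp only [Nat.add_sub_cancel] at hk ⊢
  refine Eq.trans ?_ (card_partitions m ((m + 1) * m / 2 - k)).symm
  apply card_dyck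
  obtain ⟨t, ht⟩ : 2 ∣ (m + 1) * m := by
    rw [mul_comm]; exact (Nat.even_mul_succ_self m).two_dvd
  have ht' : ((m : ℤ) + 1) * m = 2 * t := by exact_mod_cast ht
  rw [ht, Nat.mul_div_cancel_left t (by norm_num)] at hk ⊢
  push_cast [hk]
  linarith
end
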